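/- Let J = [[0,1],[−1,0]], let A₁ ∈ so(2k) be the block-diagonal matrix with k copies of J, and let B₁,…,B₆ ∈ so(4) be B₁ = diag(J,J), B₂ = E₁₄ + E₂₃ − E₃₂ − E₄₁, B₃ = E₁₃ + E₂₄ − E₃₁ − E₄₂, B₄ = diag(J,−J), B₅ = E₁₄ − E₂₃ + E₃₂ − E₄₁, B₆ = E₁₃ − E₂₄ − E₃₁ + E₄₂. For real parameters a₁, b₁,…,b_{n−1}, c₁,…,c_{n−1}, d₁,…,d_j (with 2 ≤ j ≤ 6), let C ∈ so(2k + 4n)^j be the concatenation whose first component is diag(a₁A₁, b₁B₁, …, b_{n−1}B₁, d₁B₁), whose second component is diag(0, c₁B₂, …, c_{n−1}B₂, d₂B₂), and whose i-th component for 3 ≤ i ≤ j is diag(0, …, 0, d_iB_i). Then m1(C) is the block-diagonal matrix diag(2a₁²·Id_{2k}, 2(b₁²+c₁²)·Id₄, …, 2(b_{n−1}²+c_{n−1}²)·Id₄, 2(d₁²+⋯+d_j²)·Id₄). Consequently, if a₁² = b₁²+c₁² = ⋯ = b_{n−1}²+c_{n−1}² = d₁²+⋯+d_j², then m1(C) =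 2a₁²·Id and hence m1(C)·C = 4a₁²·C, so C is a GL_{2k+4n}(ℝ)-distinguished point. -/

import Mathlib

/-!
Both `J` and each `Bᵢ` are complex structures, i.e. they square to `-1`. Hence each component of
`C`, being block diagonal with blocks that are scalar multiples of these, has a diagonal square
(`concatC_mul_self`), and summing over the components adds the squares of the coefficients block by
block. If all the resulting scalars agree then `m1(C)` is the scalar matrix `2a₁²`, and a scalar
matrix `r` acts on any tuple as multiplication by `2r`.
-/

open Matrix BigOperators

/-- The moment map polynomial `m1(C) = -2 ∑ α, (Cᵅ)²`, for tuples of square matrices over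
an arbitrary (finite) index type. -/
def m1 {ι : Type*} [Fintype ι] {p : ℕ} (C : Fin p → Matrix ι ι ℝ) : Matrix ι ι ℝ :=
  (-2 : ℝ) • ∑ α, C α * C α

/-- `Jmat = [[0,1],[−1,0]]`. -/
def Jmat : Matrix (Fin 2) (Fin 2) ℝ := !![0, 1; -1, 0]

/-- The six matrices `B₁,…,B₆ ∈ so(4)` (0-indexed): `B₁ = diag(J,J)`,
`B₂ = E₁₄ + E₂₃ − E₃₂ − E₄₁`, `B₃ = E₁₃ + E₂₄ − E₃₁ − E₄₂`, `B₄ = diag(J,−J)`,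
`B₅ = E₁₄ − E₂₃ + E₃₂ − E₄₁`, `B₆ = E₁₃ − E₂₄ − E₃₁ + E₄₂`. -/
def Bmat : Fin 6 → Matrix (Fin 4) (Fin 4) ℝ :=
  ![!![0,1,0,0; -1,0,0,0; 0,0,0,1; 0,0,-1,0],
    !![0,0,0,1; 0,0,1,0; 0,-1,0,0; -1,0,0,0],
    !![0,0,1,0; 0,0,0,1; -1,0,0,0; 0,-1,0,0],
    !![0,1,0,0; -1,0,0,0; 0,0,0,-1; 0,0,1,0],
    !![0,0,0,1; 0,0,-1,0; 0,1,0,0; -1,0,0,0],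
    !![0,0,1,0; 0,0,0,-1; -1,0,0,0; 0,1,0,0]]

/-- The index type for `so(2k + 4n)`, presented as blocks: one block of size `2k`
(itself `k` copies of size-2 blocks), then `n−1` blocks of size 4, then one block of
size 4. -/
abbrev blockIdx (k n : ℕ) : Type :=
  (Fin 2 × Fin k) ⊕ ((Fin 4 × Fin (n - 1)) ⊕ Fin 4)

/-- The concatenated tuple `C ∈ so(2k+4n)^j` of the paper's second family of examples:
the first component is `diag(a₁A₁, b₁B₁, …, b_{n−1}B₁, d₁B₁)` (with `A₁ ∈ so(2k)` the
block-diagonal matrix with `k` copies of `J`), the second component is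
`diag(0, c₁B₂, …, c_{n−1}B₂, d₂B₂)`, and the `i`-th component for `3 ≤ i ≤ j` is
`diag(0, …, 0, d_iB_i)`. -/
def concatC (k n j : ℕ) (hj : j ≤ 6) (a₁ : ℝ) (b c : Fin (n - 1) → ℝ) (d : Fin j → ℝ) :
    Fin j → Matrix (blockIdx k n) (blockIdx k n) ℝ :=
  fun i => Matrix.fromBlocks
    (if (i : ℕ) = 0 then a₁ • Matrix.blockDiagonal (fun _ : Fin k => Jmat) else 0) 0 0
    (Matrix.fromBlocks
      (Matrix.blockDiagonal fun t =>
        (if (i : ℕ) = 0 then b t else if (i : ℕ) = 1 then c t else 0) •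
          Bmat (Fin.castLE hj i)) 0 0
      (d i • Bmat (Fin.castLE hj i)))

lemma Jmat_mul_self : Jmat * Jmat = -1 := by
  ext x y
  fin_cases x <;> fin_cases y <;> simp [Jmat]

lemma Bmat_mul_self (i : Fin 6) : Bmat i * Bmat i = -1 := by
  ext x y
  fin_cases i <;> fin_cases x <;> fin_cases y <;>
    simp [Bmat, Matrix.mul_apply, Fin.sum_univ_four]

/-- The `i`-th entry of the coefficient sequence `x, y, 0, 0, …`. With `x = b_t`, `y = c_t` these
are the coefficients of `Bᵢ` in the `t`-th middle block of `C`; with `x = a₁`, `y = 0` they are the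
coefficients of `A₁` in its first block. -/
def midCoeff (i : ℕ) (x y : ℝ) : ℝ := if i = 0 then x else if i = 1 then y else 0

lemma sum_midCoeff_sq {j : ℕ} (hj2 : 2 ≤ j) (x y : ℝ) :
    ∑ i : Fin j, midCoeff i x y ^ 2 = x ^ 2 + y ^ 2 := by
  obtain ⟨m, rfl⟩ := Nat.exists_eq_add_of_le' hj2
  simp [Fin.sum_univ_succ, midCoeff]

/-- Blockwise, the square of a component of `C` is `-1` times the square of the block's
coefficient, because `J² = -1` and `Bᵢ² = -1`. -/
lemma concatC_mul_self (k n j : ℕ) (hj : j ≤ 6) (a₁ : ℝ) (b c : Fin (n - 1) → ℝ)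
    (d : Fin j → ℝ) (i : Fin j) :
    concatC k n j hj a₁ b c d i * concatC k n j hj a₁ b c d i =
      -Matrix.diagonal (Sum.elim (fun _ => midCoeff i a₁ 0 ^ 2)
        (Sum.elim (fun p => midCoeff i (b p.2) (c p.2) ^ 2) (fun _ => d i ^ 2))) := by
  have hA : (if (i : ℕ) = 0 then a₁ • Matrix.blockDiagonal (fun _ : Fin k => Jmat) else 0) =
      midCoeff i a₁ 0 • Matrix.blockDiagonal (fun _ : Fin k => Jmat) := by
    by_cases h : (i : ℕ) = 0 <;> simp [midCoeff, h]
  have hJ : Matrix.blockDiagonal (fun _ : Fin k => Jmat) *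
      Matrix.blockDiagonal (fun _ : Fin k => Jmat) = -1 := by
    rw [← Matrix.blockDiagonal_mul]
    simp only [Jmat_mul_self]
    exact (Matrix.blockDiagonal_neg _).trans (congrArg _ Matrix.blockDiagonal_one)
  have hC : concatC k n j hj a₁ b c d i = Matrix.fromBlocks
      (midCoeff i a₁ 0 • Matrix.blockDiagonal (fun _ : Fin k => Jmat)) 0 0
      (Matrix.fromBlocks
        (Matrix.blockDiagonal fun t => midCoeff i (b t) (c t) • Bmat (Fin.castLE hj i)) 0 0
        (d i • Bmat (Fin.castLE hj i))) := by
    rw [← hA]; rfl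
  rw [hC]
  simp only [Matrix.fromBlocks_multiply, Matrix.mul_zero, Matrix.zero_mul, add_zero, zero_add,
    ← Matrix.blockDiagonal_mul, smul_mul_smul_comm, hJ, Bmat_mul_self]
  ext (⟨x, s⟩ | ⟨x, s⟩ | x) (⟨y, t⟩ | ⟨y, t⟩ | y) <;>
    simp [Matrix.blockDiagonal_apply, Matrix.diagonal_apply, Matrix.one_apply, sq]
  all_goals grind

/-- For the concatenated tuple `C` above, `m1(C)` is the block-diagonal matrix
`diag(2a₁²·Id_{2k}, 2(b₁²+c₁²)·Id₄, …, 2(b_{n−1}²+c_{n−1}²)·Id₄, 2(d₁²+⋯+d_j²)·Id₄)`.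
Consequently, if `a₁² = b₁²+c₁² = ⋯ = b_{n−1}²+c_{n−1}² = d₁²+⋯+d_j²`, then
`m1(C) = 2a₁²·Id` and hence `m1(C)·C = 4a₁²·C`, so `C` is a `GL_{2k+4n}(ℝ)`-distinguished
point. -/
theorem statement16 (k n j : ℕ) (hk : 1 ≤ k) (hn : 1 ≤ n) (hj2 : 2 ≤ j) (hj : j ≤ 6)
    (a₁ : ℝ) (b c : Fin (n - 1) → ℝ) (d : Fin j → ℝ) :
    m1 (concatC k n j hj a₁ b c d) =
      Matrix.fromBlocks
        ((2 * a₁ ^ 2) • (1 : Matrix (Fin 2 × Fin k) (Fin 2 × Fin k) ℝ)) 0 0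
        (Matrix.fromBlocks
          (Matrix.blockDiagonal fun t =>
            (2 * (b t ^ 2 + c t ^ 2)) • (1 : Matrix (Fin 4) (Fin 4) ℝ)) 0 0
          ((2 * ∑ i, d i ^ 2) • (1 : Matrix (Fin 4) (Fin 4) ℝ))) ∧
    ((∀ t, b t ^ 2 + c t ^ 2 = a₁ ^ 2) → (∑ i, d i ^ 2 = a₁ ^ 2) →
      m1 (concatC k n j hj a₁ b c d) =
        (2 * a₁ ^ 2) • (1 : Matrix (blockIdx k n) (blockIdx k n) ℝ) ∧
      ∀ i, m1 (concatC k n j hj a₁ b c d) * concatC k n j hj a₁ b c d i +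
          concatC k n j hj a₁ b c d i * (m1 (concatC k n j hj a₁ b c d))ᵀ =
        (4 * a₁ ^ 2) • concatC k n j hj a₁ b c d i) := by
  have hm : m1 (concatC k n j hj a₁ b c d) =
      Matrix.diagonal (Sum.elim (fun _ => 2 * a₁ ^ 2)
        (Sum.elim (fun p => 2 * (b p.2 ^ 2 + c p.2 ^ 2)) (fun _ => 2 * ∑ i, d i ^ 2))) := by
    unfold m1
    simp only [concatC_mul_self]
    ext x y
    rw [Matrix.smul_apply, Matrix.sum_apply]
    by_cases h : x = y
    · subst h
      rcases x with x | x | x <;>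
        simp only [Matrix.neg_apply, Matrix.diagonal_apply_eq, Sum.elim_inl, Sum.elim_inr,
          Finset.sum_neg_distrib, sum_midCoeff_sq hj2, smul_eq_mul] <;>
        ring
    · simp [h]
  refine ⟨?_, fun hbc hd => ?_⟩
  · rw [hm]
    ext (⟨x, s⟩ | ⟨x, s⟩ | x) (⟨y, t⟩ | ⟨y, t⟩ | y) <;>
      simp [Matrix.blockDiagonal_apply, Matrix.diagonal_apply, Matrix.one_apply]
    all_goals grind
  · have hs : m1 (concatC k n j hj a₁ b c d) =
        (2 * a₁ ^ 2) • (1 : Matrix (blockIdx k n) (blockIdx k n) ℝ) := by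
      rw [hm, hd, Matrix.smul_one_eq_diagonal]
      congr 1
      ext (x | x | x) <;> simp [hbc]
    refine ⟨hs, fun i => ?_⟩
    rw [hs]
    simp only [Matrix.transpose_smul, Matrix.transpose_one, Matrix.smul_mul, Matrix.mul_smul,
      Matrix.one_mul, Matrix.mul_one, ← add_smul]
    congr 1
    ring
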